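/- Let ρ > 0 and σ > 0, and define m(λ) = ρσ · ∫_0^∞ ln(1 + sinh²(λ/(2ρ))·erfc(η)·erfc(−η)) dη. Then lim_{λ→0} ( m(λ) − σλ²/(2ρ√(2π)) ) / λ⁴ = (σ/(48ρ³)) · ∫_0^∞ (1 − (3/2)·erfc(η)·erfc(−η)) · erfc(η)·erfc(−η) dη. Equivalently, the fourth cumulant of the tracer position in the quenched setting is ⟨x(t)⁴⟩_c = (σ√t/(2ρ³)) · ∫_0^∞ (1 − (3/2)·erfc(η)·erfc(−η))·erfc(η)·erfc(−η) dη. -/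

import Mathlib

open MeasureTheory Real Filter Topology

/-- The complementary error function `erfc(x) = (2/√π) ∫_x^∞ e^{−u²} du`. -/
noncomputable def erfc (x : ℝ) : ℝ := (2 / Real.sqrt π) * ∫ u in Set.Ioi x, Real.exp (-u ^ 2)

/-- The quenched cumulant generating function per unit `√t`:
`m(λ) = ρσ ∫_0^∞ ln(1 + sinh²(λ/(2ρ))·erfc(η)·erfc(−η)) dη`. -/
noncomputable def mq (ρ σ l : ℝ) : ℝ :=
  ρ * σ * ∫ η in Set.Ioi (0 : ℝ),
    Real.log (1 + Real.sinh (l / (2 * ρ)) ^ 2 * erfc η * erfc (-η))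

/-!
Write `p η = erfc η * erfc (-η)` and `s = sinh² (λ / (2ρ))`. Since `p ≥ 0` is integrable and square
integrable, dominated convergence gives `∫ log (1 + s p) = s ∫ p - s² / 2 ∫ p² + o(s²)`, and
`s = x² + x⁴ / 3 + o(x⁴)` with `x = λ / (2ρ)` turns this into
`x² ∫ p + x⁴ (∫ p / 3 - ∫ p² / 2) + o(x⁴)`. The quadratic term is explicit because `p` has an
elementary antiderivative in terms of `erfc`, which yields `∫ p = √(2 / π)`.
-/

lemma tendsto_mul_const_nhdsNE_zero {M₀ : Type*} [MulZeroClass M₀] [NoZeroDivisors M₀]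
    [TopologicalSpace M₀] [SeparatelyContinuousMul M₀] {c : M₀} (hc : c ≠ 0) :
    Tendsto (fun x => x * c) (𝓝[≠] 0) (𝓝[≠] 0) :=
  tendsto_nhdsWithin_iff.2
    ⟨((continuous_mul_const c).tendsto' 0 0 (zero_mul c)).mono_left nhdsWithin_le_nhds,
      eventually_mem_nhdsWithin.mono fun _ hx => mul_ne_zero hx hc⟩

section LogExpansion

lemma abs_log_one_add_sub_self_le {y : ℝ} (hy : 0 ≤ y) : |log (1 + y) - y| ≤ y ^ 2 / 2 := by
  have upper : log (1 + y) ≤ y := by linarith [log_le_sub_one_of_pos (show 0 < 1 + y by positivity)]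
  have lower : y - y ^ 2 / 2 ≤ log (1 + y) := by
    refine le_trans ?_ (le_log_one_add_of_nonneg hy)
    rw [le_div_iff₀ (by positivity)]
    nlinarith [pow_nonneg hy 3]
  rw [abs_le]
  constructor <;> linarith

lemma tendsto_log_one_add_sub_self_div_sq :
    Tendsto (fun y : ℝ => (log (1 + y) - y) / y ^ 2) (𝓝[≠] 0) (𝓝 (-1 / 2)) := by
  have hpos : ∀ᶠ y : ℝ in 𝓝[≠] 0, 0 < 1 + y :=
    nhdsWithin_le_nhds ((eventually_gt_nhds neg_one_lt_zero).mono fun y hy => by linarith)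
  have hnum : ∀ᶠ y : ℝ in 𝓝[≠] 0, HasDerivAt (fun y => log (1 + y) - y) (1 / (1 + y) - 1) y :=
    hpos.mono fun y hy => (((hasDerivAt_id y).const_add 1).log hy.ne').sub (hasDerivAt_id y)
  have hden : ∀ᶠ y : ℝ in 𝓝[≠] 0, HasDerivAt (fun y => y ^ 2) (2 * y) y :=
    .of_forall fun y => by simpa using hasDerivAt_pow 2 y
  have hden_ne : ∀ᶠ y : ℝ in 𝓝[≠] 0, 2 * y ≠ 0 :=
    eventually_mem_nhdsWithin.mono fun y hy => mul_ne_zero two_ne_zero hy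
  have hnum_zero : Tendsto (fun y : ℝ => log (1 + y) - y) (𝓝[≠] 0) (𝓝 0) := by
    have : ContinuousAt (fun y : ℝ => log (1 + y) - y) 0 := by fun_prop (disch := norm_num)
    simpa using this.tendsto.mono_left nhdsWithin_le_nhds
  have hden_zero : Tendsto (fun y : ℝ => y ^ 2) (𝓝[≠] 0) (𝓝 0) := by
    simpa using ((continuous_pow 2).tendsto (0 : ℝ)).mono_left nhdsWithin_le_nhds
  refine HasDerivAt.lhopital_zero_nhdsNE hnum hden hden_ne hnum_zero hden_zero ?_
  have hquot : ContinuousAt (fun y : ℝ => -1 / (2 * (1 + y))) 0 := by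
    fun_prop (disch := norm_num)
  have hlim := hquot.tendsto.mono_left (nhdsWithin_le_nhds (s := {0}ᶜ))
  simp only [add_zero, mul_one] at hlim
  refine hlim.congr' ?_
  filter_upwards [hpos, self_mem_nhdsWithin] with y hy (hy0 : y ≠ 0)
  field_simp
  ring

lemma tendsto_log_one_add_mul_sub_div_sq (c : ℝ) :
    Tendsto (fun t : ℝ => (log (1 + t * c) - t * c) / t ^ 2) (𝓝[≠] 0) (𝓝 (-c ^ 2 / 2)) := by
  rcases eq_or_ne c 0 with rfl | hc
  · simp
  have h := (tendsto_log_one_add_sub_self_div_sq.comp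
    (tendsto_mul_const_nhdsNE_zero hc)).mul_const (c ^ 2)
  rw [show -1 / 2 * c ^ 2 = -c ^ 2 / 2 by ring] at h
  refine h.congr fun t => ?_
  rw [Function.comp_apply]
  field_simp

variable {α : Type*} [MeasurableSpace α] {μ : Measure α} {p : α → ℝ}

lemma integrable_log_one_add (hp : Integrable p μ) (hp0 : 0 ≤ᵐ[μ] p) :
    Integrable (fun a => log (1 + p a)) μ := by
  refine hp.mono' (measurable_log.comp_aemeasurable
    (hp.aemeasurable.const_add 1)).aestronglyMeasurable ?_
  filter_upwards [hp0] with a (ha : 0 ≤ p a)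
  rw [norm_of_nonneg (log_nonneg (by linarith))]
  linarith [log_le_sub_one_of_pos (show 0 < 1 + p a by positivity)]

lemma tendsto_integral_log_one_add_mul_sub_div_sq (hp : Integrable p μ)
    (hp2 : Integrable (fun a => p a ^ 2) μ) (hp0 : 0 ≤ᵐ[μ] p) :
    Tendsto (fun t : ℝ => ((∫ a, log (1 + t * p a) ∂μ) - t * ∫ a, p a ∂μ) / t ^ 2)
      (𝓝[>] 0) (𝓝 (-(∫ a, p a ^ 2 ∂μ) / 2)) := by
  have hlog : ∀ t > (0 : ℝ), Integrable (fun a => log (1 + t * p a)) μ := fun t ht =>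
    integrable_log_one_add (hp.const_mul t) (hp0.mono fun a ha => mul_nonneg ht.le ha)
  have hmeas : ∀ᶠ t : ℝ in 𝓝[>] 0,
      AEStronglyMeasurable (fun a => (log (1 + t * p a) - t * p a) / t ^ 2) μ :=
    eventually_mem_nhdsWithin.mono fun t ht =>
      (((hlog t ht).sub (hp.const_mul t)).div_const (t ^ 2)).aestronglyMeasurable
  have hbound : ∀ᶠ t : ℝ in 𝓝[>] 0, ∀ᵐ a ∂μ,
      ‖(log (1 + t * p a) - t * p a) / t ^ 2‖ ≤ p a ^ 2 / 2 := by
    filter_upwards [self_mem_nhdsWithin] with t (ht : 0 < t)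
    filter_upwards [hp0] with a ha
    rw [norm_eq_abs, abs_div, abs_of_pos (pow_pos ht 2), div_le_iff₀ (pow_pos ht 2)]
    exact (abs_log_one_add_sub_self_le (mul_nonneg ht.le ha)).trans_eq (by ring)
  have hlim : ∀ᵐ a ∂μ, Tendsto (fun t : ℝ => (log (1 + t * p a) - t * p a) / t ^ 2)
      (𝓝[>] 0) (𝓝 (-p a ^ 2 / 2)) :=
    .of_forall fun a => (tendsto_log_one_add_mul_sub_div_sq (p a)).mono_left (nhdsGT_le_nhdsNE 0)
  have hdom := tendsto_integral_filter_of_dominated_convergence (fun a => p a ^ 2 / 2)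
    hmeas hbound (hp2.div_const 2) hlim
  rw [integral_div, integral_neg] at hdom
  refine hdom.congr' ?_
  filter_upwards [self_mem_nhdsWithin] with t ht
  rw [integral_div, integral_sub (hlog t ht) (hp.const_mul t), integral_const_mul]

end LogExpansion

section SinhExpansion

lemma tendsto_sinh_div_self : Tendsto (fun x : ℝ => sinh x / x) (𝓝[≠] 0) (𝓝 1) := by
  simpa [slope_fun_def_field] using (hasDerivAt_sinh 0).tendsto_slope

lemma tendsto_sinh_sub_self_div_cube :
    Tendsto (fun x : ℝ => (sinh x - x) / x ^ 3) (𝓝[≠] 0) (𝓝 (1 / 6)) := by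
  have hnum (x : ℝ) : HasDerivAt (fun x => sinh x - x) (cosh x - 1) x :=
    (hasDerivAt_sinh x).sub (hasDerivAt_id x)
  have hden (x : ℝ) : HasDerivAt (fun x => x ^ 3) (3 * x ^ 2) x := by
    simpa using hasDerivAt_pow 3 x
  have hden_ne : ∀ᶠ x : ℝ in 𝓝[≠] 0, 3 * x ^ 2 ≠ 0 :=
    eventually_mem_nhdsWithin.mono fun x hx => mul_ne_zero three_ne_zero (pow_ne_zero 2 hx)
  have hnum_zero : Tendsto (fun x : ℝ => sinh x - x) (𝓝[≠] 0) (𝓝 0) := by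
    simpa using (hnum 0).continuousAt.tendsto.mono_left nhdsWithin_le_nhds
  have hden_zero : Tendsto (fun x : ℝ => x ^ 3) (𝓝[≠] 0) (𝓝 0) := by
    simpa using (hden 0).continuousAt.tendsto.mono_left nhdsWithin_le_nhds
  refine HasDerivAt.lhopital_zero_nhdsNE (.of_forall hnum) (.of_forall hden) hden_ne
    hnum_zero hden_zero ?_
  have hhalf : Tendsto (fun x : ℝ => x / 2) (𝓝[≠] 0) (𝓝[≠] 0) := by
    simpa only [div_eq_mul_inv] using tendsto_mul_const_nhdsNE_zero (inv_ne_zero two_ne_zero)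
  have h := ((tendsto_sinh_div_self.comp hhalf).pow 2).mul_const (1 / 6)
  rw [one_pow, one_mul] at h
  refine h.congr fun x => ?_
  have hcosh : cosh x - 1 = 2 * sinh (x / 2) ^ 2 := by
    have hdouble := cosh_two_mul (x / 2)
    rw [mul_div_cancel₀ x two_ne_zero] at hdouble
    linarith [cosh_sq (x / 2)]
  rw [Function.comp_apply, hcosh]
  field_simp
  ring

lemma tendsto_sinh_sq_sub_sq_div_pow_four :
    Tendsto (fun x : ℝ => (sinh x ^ 2 - x ^ 2) / x ^ 4) (𝓝[≠] 0) (𝓝 (1 / 3)) := by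
  have h := tendsto_sinh_sub_self_div_cube.mul (tendsto_sinh_div_self.add_const 1)
  rw [show (1 / 6 * (1 + 1) : ℝ) = 1 / 3 by norm_num] at h
  refine h.congr' ?_
  filter_upwards [self_mem_nhdsWithin] with x (hx : x ≠ 0)
  field_simp
  ring

lemma tendsto_sinh_sq_nhdsGT_zero : Tendsto (fun x : ℝ => sinh x ^ 2) (𝓝[≠] 0) (𝓝[>] 0) := by
  refine tendsto_nhdsWithin_iff.2 ⟨?_, ?_⟩
  · have hcont : Continuous fun x : ℝ => sinh x ^ 2 := by fun_prop
    exact (hcont.tendsto' 0 0 (by simp)).mono_left nhdsWithin_le_nhds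
  · filter_upwards [self_mem_nhdsWithin] with x (hx : x ≠ 0)
    exact sq_pos_of_ne_zero (sinh_ne_zero.2 hx)

end SinhExpansion

theorem tendsto_integral_log_one_add_sinh_sq_mul_sub_div_pow_four {α : Type*} [MeasurableSpace α]
    {μ : Measure α} {p : α → ℝ} (hp : Integrable p μ) (hp2 : Integrable (fun a => p a ^ 2) μ)
    (hp0 : 0 ≤ᵐ[μ] p) :
    Tendsto (fun x : ℝ => ((∫ a, log (1 + sinh x ^ 2 * p a) ∂μ) - x ^ 2 * ∫ a, p a ∂μ) / x ^ 4)
      (𝓝[≠] 0) (𝓝 ((∫ a, p a ∂μ) / 3 - (∫ a, p a ^ 2 ∂μ) / 2)) := by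
  have hlog := (tendsto_integral_log_one_add_mul_sub_div_sq hp hp2 hp0).comp
    tendsto_sinh_sq_nhdsGT_zero
  have h := (hlog.mul (tendsto_sinh_div_self.pow 4)).add
    (tendsto_sinh_sq_sub_sq_div_pow_four.mul_const (∫ a, p a ∂μ))
  convert! h.congr' ?_ using 2
  · ring
  filter_upwards [self_mem_nhdsWithin] with x (hx : x ≠ 0)
  have hsinh : sinh x ≠ 0 := sinh_ne_zero.2 hx
  simp only [Function.comp_apply]
  field_simp
  ring

section Erfc

lemma integrable_exp_neg_sq : Integrable (fun u : ℝ => exp (-u ^ 2)) := by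
  simpa using integrable_exp_neg_mul_sq one_pos

lemma tendsto_exp_neg_sq_atTop : Tendsto (fun x : ℝ => exp (-x ^ 2)) atTop (𝓝 0) :=
  tendsto_exp_neg_atTop_nhds_zero.comp (tendsto_pow_atTop two_ne_zero)

lemma hasDerivAt_exp_neg_sq (x : ℝ) :
    HasDerivAt (fun u : ℝ => exp (-u ^ 2)) (-(2 * x * exp (-x ^ 2))) x := by
  convert! (hasDerivAt_pow 2 x).fun_neg.exp using 1
  push_cast
  ring

lemma erfc_nonneg (x : ℝ) : 0 ≤ erfc x :=
  mul_nonneg (by positivity) (integral_nonneg fun u => (exp_pos _).le)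

lemma erfc_zero : erfc 0 = 1 := by
  have hhalf : ∫ u in Set.Ioi (0 : ℝ), exp (-u ^ 2) = √π / 2 := by
    simpa using integral_gaussian_Ioi 1
  rw [erfc, hhalf]
  field_simp

lemma erfc_neg (x : ℝ) : erfc (-x) = 2 - erfc x := by
  have hreflect : ∫ u in Set.Ioi (-x), exp (-u ^ 2) = ∫ u in Set.Iic x, exp (-u ^ 2) := by
    rw [← integral_comp_neg_Iic x fun u : ℝ => exp (-u ^ 2)]
    simp only [neg_sq]
  have htotal : (∫ u in Set.Iic x, exp (-u ^ 2)) + ∫ u in Set.Ioi x, exp (-u ^ 2) = √π := by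
    rw [intervalIntegral.integral_Iic_add_Ioi integrable_exp_neg_sq.integrableOn
      integrable_exp_neg_sq.integrableOn]
    simpa using integral_gaussian 1
  rw [erfc, erfc, hreflect, eq_sub_of_add_eq htotal]
  field_simp

lemma hasDerivAt_erfc (x : ℝ) : HasDerivAt erfc (-(2 / √π * exp (-x ^ 2))) x := by
  have hcont : Continuous fun u : ℝ => exp (-u ^ 2) := by fun_prop
  have hprim := (hcont.integral_hasStrictDerivAt 0 x).hasDerivAt
  refine ((hprim.const_mul (2 / √π)).const_sub 1).congr_of_eventuallyEq (.of_forall fun y => ?_)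
  have htail := intervalIntegral.integral_Ioi_sub_Ioi' (a := 0) (b := y)
    integrable_exp_neg_sq.integrableOn integrable_exp_neg_sq.integrableOn
  simp only [← htail, ← erfc_zero, erfc]
  ring

lemma tendsto_erfc_atTop : Tendsto erfc atTop (𝓝 0) := by
  have h := (tendsto_integral_Ioi_zero (f := fun u : ℝ => exp (-u ^ 2)) (μ := volume)
    tendsto_id).const_mul (2 / √π)
  rwa [mul_zero] at h

lemma tendsto_mul_erfc_atTop : Tendsto (fun x => x * erfc x) atTop (𝓝 0) := by
  have hint : Integrable fun u : ℝ => u * exp (-u ^ 2) := by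
    simpa using integrable_mul_exp_neg_mul_sq one_pos
  have htail : Tendsto (fun x : ℝ => 2 / √π * ∫ u in Set.Ioi x, u * exp (-u ^ 2)) atTop (𝓝 0) := by
    simpa using (tendsto_integral_Ioi_zero tendsto_id).const_mul (2 / √π)
  refine squeeze_zero' ?_ ?_ htail
  · filter_upwards [eventually_ge_atTop 0] with x hx using mul_nonneg hx (erfc_nonneg x)
  · refine .of_forall fun x => ?_
    rw [erfc, mul_left_comm, ← integral_const_mul]
    gcongr 2 / √π * ?_
    refine setIntegral_mono_on (integrable_exp_neg_sq.integrableOn.const_mul x)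
      hint.integrableOn measurableSet_Ioi fun u hu => ?_
    gcongr
    exact le_of_lt hu

end Erfc

section ErfcProd

/-- The symmetric product `erfc x * erfc (-x)`, the profile through which the cumulant generating
function `mq` depends on the space variable. -/
noncomputable def erfcProd (x : ℝ) : ℝ := erfc x * erfc (-x)

lemma erfcProd_eq (x : ℝ) : erfcProd x = erfc x * (2 - erfc x) := by
  rw [erfcProd, erfc_neg]

lemma erfcProd_nonneg (x : ℝ) : 0 ≤ erfcProd x := mul_nonneg (erfc_nonneg x) (erfc_nonneg (-x))

lemma erfcProd_le_one (x : ℝ) : erfcProd x ≤ 1 := by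
  rw [erfcProd_eq]
  linarith [sq_nonneg (erfc x - 1)]

lemma hasDerivAt_erfcProd (x : ℝ) :
    HasDerivAt erfcProd (-(4 / √π * exp (-x ^ 2) * (1 - erfc x))) x := by
  rw [funext erfcProd_eq]
  convert! (hasDerivAt_erfc x).mul ((hasDerivAt_erfc x).const_sub 2) using 1
  ring

/-- The antiderivative of `erfcProd` vanishing at `+∞`, obtained by integrating by parts twice: the
boundary terms `x * erfcProd x` and `exp (-x²) * (erfc x - 1)` leave the integrand `exp (-2x²)`,
whose antiderivative is the last term. -/
noncomputable def erfcProdAntideriv (x : ℝ) : ℝ :=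
  x * erfcProd x + 2 / √π * (exp (-x ^ 2) * (erfc x - 1)) - √2 / √π * erfc (√2 * x)

lemma hasDerivAt_erfcProdAntideriv (x : ℝ) : HasDerivAt erfcProdAntideriv (erfcProd x) x := by
  have hboundary := (hasDerivAt_id x).mul (hasDerivAt_erfcProd x)
  have hgauss := ((hasDerivAt_exp_neg_sq x).mul ((hasDerivAt_erfc x).sub_const 1)).const_mul
    (2 / √π)
  have hscale : HasDerivAt (fun u : ℝ => √2 * u) √2 x := by
    simpa using (hasDerivAt_id x).const_mul √2
  have hrescaled := ((hasDerivAt_erfc (√2 * x)).comp x hscale).const_mul (√2 / √π)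
  convert! (hboundary.add hgauss).sub hrescaled using 1
  have hsqrt : √2 * √2 = 2 := mul_self_sqrt zero_le_two
  have hexp : exp (-(√2 * x) ^ 2) = exp (-x ^ 2) * exp (-x ^ 2) := by
    rw [← exp_add, mul_pow, sq_sqrt zero_le_two]
    ring_nf
  simp only [hexp, id]
  linear_combination (-(2 / √π / √π * exp (-x ^ 2) ^ 2)) * hsqrt

lemma tendsto_erfcProdAntideriv_atTop : Tendsto erfcProdAntideriv atTop (𝓝 0) := by
  have hboundary : Tendsto (fun x => x * erfcProd x) atTop (𝓝 0) := by
    simpa [erfcProd_eq, mul_assoc] using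
      tendsto_mul_erfc_atTop.mul (tendsto_erfc_atTop.const_sub 2)
  have hgauss := (tendsto_exp_neg_sq_atTop.mul (tendsto_erfc_atTop.sub_const 1)).const_mul (2 / √π)
  have hscale : Tendsto (fun x : ℝ => √2 * x) atTop atTop :=
    tendsto_id.const_mul_atTop (by positivity)
  have hrescaled := (tendsto_erfc_atTop.comp hscale).const_mul (√2 / √π)
  have h := (hboundary.add hgauss).sub hrescaled
  simp only [zero_mul, mul_zero, add_zero, sub_zero] at h
  exact h

lemma integrableOn_erfcProd : IntegrableOn erfcProd (Set.Ioi 0) :=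
  integrableOn_Ioi_deriv_of_nonneg' (fun x _ => hasDerivAt_erfcProdAntideriv x)
    (fun x _ => erfcProd_nonneg x) tendsto_erfcProdAntideriv_atTop

lemma integral_Ioi_erfcProd : ∫ x in Set.Ioi 0, erfcProd x = √(2 / π) := by
  rw [integral_Ioi_of_hasDerivAt_of_nonneg' (fun x _ => hasDerivAt_erfcProdAntideriv x)
    (fun x _ => erfcProd_nonneg x) tendsto_erfcProdAntideriv_atTop]
  simp [erfcProdAntideriv, erfc_zero]

lemma integrableOn_erfcProd_sq : IntegrableOn (fun x => erfcProd x ^ 2) (Set.Ioi 0) := by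
  refine integrableOn_erfcProd.mono' (integrableOn_erfcProd.aestronglyMeasurable.pow 2)
    (.of_forall fun x => ?_)
  rw [norm_of_nonneg (sq_nonneg _)]
  exact pow_le_of_le_one (erfcProd_nonneg x) (erfcProd_le_one x) two_ne_zero

end ErfcProd

lemma mq_eq_integral_erfcProd (ρ σ l : ℝ) :
    mq ρ σ l = ρ * σ * ∫ η in Set.Ioi 0, log (1 + sinh (l / (2 * ρ)) ^ 2 * erfcProd η) := by
  simp only [mq, erfcProd, mul_assoc]

lemma integral_fourth_cumulant_integrand :
    ∫ η in Set.Ioi (0 : ℝ), (1 - (3 / 2) * erfc η * erfc (-η)) * (erfc η * erfc (-η)) =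
      (∫ η in Set.Ioi 0, erfcProd η) - 3 / 2 * ∫ η in Set.Ioi 0, erfcProd η ^ 2 := by
  rw [← integral_const_mul, ← integral_sub integrableOn_erfcProd
    (integrableOn_erfcProd_sq.const_mul _)]
  refine integral_congr_ae (.of_forall fun η => ?_)
  simp only [erfcProd]
  ring

/-- `lim_{λ→0} (m(λ) − σλ²/(2ρ√(2π)))/λ⁴
      = (σ/(48ρ³)) ∫_0^∞ (1 − (3/2)erfc(η)erfc(−η))·erfc(η)erfc(−η) dη`:
the fourth quenched cumulant of the tracer position. -/
theorem quenched_fourth_cumulant (ρ σ : ℝ) (hρ : 0 < ρ) (hσ : 0 < σ) :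
    Tendsto (fun l : ℝ =>
        (mq ρ σ l - σ * l ^ 2 / (2 * ρ * Real.sqrt (2 * π))) / l ^ 4)
      (𝓝[≠] 0)
      (nhds ((σ / (48 * ρ ^ 3)) *
        ∫ η in Set.Ioi (0 : ℝ),
          (1 - (3 / 2) * erfc η * erfc (-η)) * (erfc η * erfc (-η)))) := by
  have hscale : Tendsto (fun l : ℝ => l / (2 * ρ)) (𝓝[≠] 0) (𝓝[≠] 0) := by
    simpa only [div_eq_mul_inv] using
      tendsto_mul_const_nhdsNE_zero (inv_ne_zero (show 2 * ρ ≠ 0 by positivity))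
  have hexpansion := ((tendsto_integral_log_one_add_sinh_sq_mul_sub_div_pow_four
    integrableOn_erfcProd integrableOn_erfcProd_sq (.of_forall erfcProd_nonneg)).comp
      hscale).const_mul (σ / (16 * ρ ^ 3))
  have hsqrt : √(2 / π) = 2 / √(2 * π) := by
    rw [eq_div_iff (by positivity), ← sqrt_mul (by positivity),
      show 2 / π * (2 * π) = 2 ^ 2 by field_simp, sqrt_sq zero_le_two]
  rw [integral_fourth_cumulant_integrand]
  convert! hexpansion.congr' ?_ using 2
  · ring
  filter_upwards [self_mem_nhdsWithin] with l (hl : l ≠ 0)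
  rw [Function.comp_apply, mq_eq_integral_erfcProd, integral_Ioi_erfcProd, hsqrt]
  field_simp
  ring
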